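/- Let φ(x) be a formula of the correspondence language with at most the free variable x. Then φ(x) is logically equivalent to the (1,2)-standard x-translation ST_12(I,x) of some modal intuitionistic formula I if and only if φ(x) is invariant with respect to (1,2)-modal asimulations. -/

import Mathlib

namespace ModalIntAsim

/-- Binary relation symbols of the correspondence vocabulary: R, R_□, R_◇. -/
inductive RelSym : Type
  | r | box | diam
deriving DecidableEq

/-- Formulas of the correspondence language: classical first-order logic without
identity, with variables indexed by `ℕ`, unary predicate letters `P n` (n : ℕ),
and the three binary relation symbols. -/
inductive FOForm : Type
  | falsum : FOForm
  | pred : ℕ → ℕ → FOForm            -- `pred n v` is `P_n(x_v)`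
  | rel : RelSym → ℕ → ℕ → FOForm    -- `rel s v w` is `S(x_v, x_w)`
  | conj : FOForm → FOForm → FOForm
  | disj : FOForm → FOForm → FOForm
  | impl : FOForm → FOForm → FOForm
  | all : ℕ → FOForm → FOForm
  | ex : ℕ → FOForm → FOForm

namespace FOForm

/-- Free variables of a correspondence formula. -/
def freeVars : FOForm → Finset ℕ
  | falsum => ∅
  | pred _ v => {v}
  | rel _ v w => {v, w}
  | conj f g => f.freeVars ∪ g.freeVars
  | disj f g => f.freeVars ∪ g.freeVars
  | impl f g => f.freeVars ∪ g.freeVars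
  | all v f => f.freeVars \ {v}
  | ex v f => f.freeVars \ {v}

/-- The unary predicate letters occurring in a formula (the binary relation
symbols R, R_□, R_◇ are regarded as belonging to every vocabulary Σ_φ). -/
def predLetters : FOForm → Finset ℕ
  | falsum => ∅
  | pred n _ => {n}
  | rel _ _ _ => ∅
  | conj f g => f.predLetters ∪ g.predLetters
  | disj f g => f.predLetters ∪ g.predLetters
  | impl f g => f.predLetters ∪ g.predLetters
  | all _ f => f.predLetters
  | ex _ f => f.predLetters

/-- Degree of a formula: the greatest number of nested quantifiers. -/
def degree : FOForm → ℕ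
  | falsum => 0
  | pred _ _ => 0
  | rel _ _ _ => 0
  | conj f g => max f.degree g.degree
  | disj f g => max f.degree g.degree
  | impl f g => max f.degree g.degree
  | all _ f => f.degree + 1
  | ex _ f => f.degree + 1

end FOForm

/-- A model of the correspondence language: a domain together with
interpretations of R, R_□, R_◇ and of the unary predicate letters.
(A Θ-model only consults the letters in Θ.) -/
structure Model : Type 1 where
  U : Type
  rel : U → U → Prop
  relBox : U → U → Prop
  relDiam : U → U → Prop
  pred : ℕ → U → Prop

/-- Interpretation of a binary relation symbol in a model. -/
def Model.relOf (M : Model) : RelSym → M.U → M.U → Prop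
  | .r => M.rel
  | .box => M.relBox
  | .diam => M.relDiam

/-- Tarskian satisfaction of a formula in a model under an assignment. -/
def Sat (M : Model) : FOForm → (ℕ → M.U) → Prop
  | .falsum, _ => False
  | .pred n v, α => M.pred n (α v)
  | .rel s v w, α => M.relOf s (α v) (α w)
  | .conj f g, α => Sat M f α ∧ Sat M g α
  | .disj f g, α => Sat M f α ∨ Sat M g α
  | .impl f g, α => Sat M f α → Sat M g α
  | .all v f, α => ∀ u : M.U, Sat M f (Function.update α v u)
  | .ex v f, α => ∃ u : M.U, Sat M f (Function.update α v u)

/-- `M, a ⊨ φ(x)`: φ is true in `M` under any assignment sending `x` to `a`. -/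
def SatAt (M : Model) (a : M.U) (x : ℕ) (φ : FOForm) : Prop :=
  ∀ α : ℕ → M.U, α x = a → Sat M φ α

/-- Logical equivalence of correspondence formulas. -/
def Equiv (φ ψ : FOForm) : Prop :=
  ∀ (M : Model) (α : ℕ → M.U), Sat M φ α ↔ Sat M ψ α

/-- Logical entailment between correspondence formulas. -/
def Entails (φ ψ : FOForm) : Prop :=
  ∀ (M : Model) (α : ℕ → M.U), Sat M φ α → Sat M ψ α

/-- Modal intuitionistic formulas: built from propositional letters `p n`
using ⊥, ∧, ∨, →, □, ◇. -/
inductive MForm : Type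
  | bot : MForm
  | prop : ℕ → MForm
  | conj : MForm → MForm → MForm
  | disj : MForm → MForm → MForm
  | impl : MForm → MForm → MForm
  | box : MForm → MForm
  | diam : MForm → MForm

/-- The (i,j)-standard x-translation `ST_ij`.  `boxOne = true` means the box
clause (□₁) is used (i = 1), `boxOne = false` means (□₂) (i = 2); likewise
`diamOne = true` means the diamond clause (◇₁) (j = 1) and `diamOne = false`
means (◇₂) (j = 2).  Bound variables are chosen fresh as `x+1`, `x+2`. -/
def ST (boxOne diamOne : Bool) : MForm → ℕ → FOForm
  | .bot, _ => .falsum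
  | .prop n, x => .pred n x
  | .conj I J, x => .conj (ST boxOne diamOne I x) (ST boxOne diamOne J x)
  | .disj I J, x => .disj (ST boxOne diamOne I x) (ST boxOne diamOne J x)
  | .impl I J, x =>
      .all (x + 1) (.impl (.rel .r x (x + 1))
        (.impl (ST boxOne diamOne I (x + 1)) (ST boxOne diamOne J (x + 1))))
  | .box I, x =>
      if boxOne then
        .all (x + 1) (.impl (.rel .box x (x + 1)) (ST boxOne diamOne I (x + 1)))
      else
        .all (x + 1) (.impl (.rel .r x (x + 1))
          (.all (x + 2) (.impl (.rel .box (x + 1) (x + 2)) (ST boxOne diamOne I (x + 2)))))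
  | .diam I, x =>
      if diamOne then
        .ex (x + 1) (.conj (.rel .diam x (x + 1)) (ST boxOne diamOne I (x + 1)))
      else
        .all (x + 1) (.impl (.rel .r x (x + 1))
          (.ex (x + 2) (.conj (.rel .diam (x + 1) (x + 2)) (ST boxOne diamOne I (x + 2)))))

/-! ### Conditions on relations between tuples (the k-asimulation conditions).
A relation between the two models is represented by its two directed
components; `N` is the model of the source tuple and `P` that of the target
tuple.  A tuple `(ā_m, a)` is represented as the list `as ++ [a]`, with
`m = as.length`. -/

section TupleConds

variable (N P : Model)

/-- The "p-type" condition: related tuples are nonempty and of equal length. -/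
def TypeCond (A : List N.U → List P.U → Prop) : Prop :=
  ∀ as bs, A as bs → as ≠ [] ∧ as.length = bs.length

/-- (p-base). -/
def BaseCond (Θ : Set ℕ) (A : List N.U → List P.U → Prop) : Prop :=
  ∀ (as : List N.U) (bs : List P.U) (a : N.U) (b : P.U),
    A (as ++ [a]) (bs ++ [b]) → ∀ n ∈ Θ, N.pred n a → P.pred n b

/-- (p-step). -/
def StepCond (k : ℕ) (A : List N.U → List P.U → Prop)
    (Arev : List P.U → List N.U → Prop) : Prop :=
  ∀ (as : List N.U) (bs : List P.U) (a : N.U) (b d : P.U),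
    A (as ++ [a]) (bs ++ [b]) → P.rel b d → as.length < k →
    ∃ c : N.U, N.rel a c ∧ A (as ++ [a, c]) (bs ++ [b, d]) ∧
      Arev (bs ++ [b, d]) (as ++ [a, c])

/-- (p-box-1). -/
def Box1Cond (k : ℕ) (A : List N.U → List P.U → Prop) : Prop :=
  ∀ (as : List N.U) (bs : List P.U) (a : N.U) (b d : P.U),
    A (as ++ [a]) (bs ++ [b]) → P.relBox b d → as.length < k →
    ∃ c : N.U, N.relBox a c ∧ A (as ++ [a, c]) (bs ++ [b, d])

/-- (p-box-2). -/
def Box2Cond (k : ℕ) (A : List N.U → List P.U → Prop) : Prop :=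
  ∀ (as : List N.U) (bs : List P.U) (a : N.U) (b d f : P.U),
    A (as ++ [a]) (bs ++ [b]) → P.rel b d → P.relBox d f → as.length + 1 < k →
    ∃ c e : N.U, N.rel a c ∧ N.relBox c e ∧ A (as ++ [a, c, e]) (bs ++ [b, d, f])

/-- (p-diam-1). -/
def Diam1Cond (k : ℕ) (A : List N.U → List P.U → Prop) : Prop :=
  ∀ (as : List N.U) (bs : List P.U) (a c : N.U) (b : P.U),
    A (as ++ [a]) (bs ++ [b]) → N.relDiam a c → as.length < k →
    ∃ d : P.U, P.relDiam b d ∧ A (as ++ [a, c]) (bs ++ [b, d])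

/-- (p-diam-2(1)). -/
def Diam2aCond (k : ℕ) (A B : List N.U → List P.U → Prop) : Prop :=
  ∀ (as : List N.U) (bs : List P.U) (a : N.U) (b d : P.U),
    A (as ++ [a]) (bs ++ [b]) → P.rel b d → as.length + 1 < k →
    ∃ c : N.U, N.rel a c ∧ B (as ++ [a, c]) (bs ++ [b, d])

/-- (p-diam-2(2)). -/
def Diam2bCond (k : ℕ) (B A : List N.U → List P.U → Prop) : Prop :=
  ∀ (as : List N.U) (bs : List P.U) (a c : N.U) (b : P.U),
    B (as ++ [a]) (bs ++ [b]) → N.relDiam a c → as.length < k →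
    ∃ d : P.U, P.relDiam b d ∧ A (as ++ [a, c]) (bs ++ [b, d])

end TupleConds

/-- An (i,1)-modal ⟨(M₁,t),(M₂,u)⟩_k-asimulation (j = 1): a single relation `A`
given by its two directed components `A12`, `A21`. -/
def IsKAsimD1 (boxOne : Bool) (Θ : Set ℕ) (M₁ M₂ : Model) (t : M₁.U) (u : M₂.U) (k : ℕ)
    (A12 : List M₁.U → List M₂.U → Prop) (A21 : List M₂.U → List M₁.U → Prop) : Prop :=
  TypeCond M₁ M₂ A12 ∧ TypeCond M₂ M₁ A21 ∧
  A12 [t] [u] ∧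
  BaseCond M₁ M₂ Θ A12 ∧ BaseCond M₂ M₁ Θ A21 ∧
  StepCond M₁ M₂ k A12 A21 ∧ StepCond M₂ M₁ k A21 A12 ∧
  (if boxOne then Box1Cond M₁ M₂ k A12 ∧ Box1Cond M₂ M₁ k A21
   else Box2Cond M₁ M₂ k A12 ∧ Box2Cond M₂ M₁ k A21) ∧
  Diam1Cond M₁ M₂ k A12 ∧ Diam1Cond M₂ M₁ k A21

/-- An (i,2)-modal ⟨(M₁,t),(M₂,u)⟩_k-asimulation (j = 2): an ordered pair
(A, B) of relations, each given by its two directed components. -/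
def IsKAsimD2 (boxOne : Bool) (Θ : Set ℕ) (M₁ M₂ : Model) (t : M₁.U) (u : M₂.U) (k : ℕ)
    (A12 : List M₁.U → List M₂.U → Prop) (A21 : List M₂.U → List M₁.U → Prop)
    (B12 : List M₁.U → List M₂.U → Prop) (B21 : List M₂.U → List M₁.U → Prop) : Prop :=
  TypeCond M₁ M₂ A12 ∧ TypeCond M₂ M₁ A21 ∧
  TypeCond M₁ M₂ B12 ∧ TypeCond M₂ M₁ B21 ∧
  A12 [t] [u] ∧
  BaseCond M₁ M₂ Θ A12 ∧ BaseCond M₂ M₁ Θ A21 ∧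
  StepCond M₁ M₂ k A12 A21 ∧ StepCond M₂ M₁ k A21 A12 ∧
  (if boxOne then Box1Cond M₁ M₂ k A12 ∧ Box1Cond M₂ M₁ k A21
   else Box2Cond M₁ M₂ k A12 ∧ Box2Cond M₂ M₁ k A21) ∧
  Diam2aCond M₁ M₂ k A12 B12 ∧ Diam2aCond M₂ M₁ k A21 B21 ∧
  Diam2bCond M₁ M₂ k B12 A12 ∧ Diam2bCond M₂ M₁ k B21 A21

/-- φ(x) is invariant with respect to (i,1)-modal k-asimulations. -/
def KInvariantD1 (boxOne : Bool) (x : ℕ) (φ : FOForm) (k : ℕ) : Prop :=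
  ∀ Θ : Set ℕ, (φ.predLetters : Set ℕ) ⊆ Θ →
  ∀ (M₁ M₂ : Model) (t : M₁.U) (u : M₂.U)
    (A12 : List M₁.U → List M₂.U → Prop) (A21 : List M₂.U → List M₁.U → Prop),
    IsKAsimD1 boxOne Θ M₁ M₂ t u k A12 A21 →
    ∀ (a : M₁.U) (b : M₂.U), A12 [a] [b] → SatAt M₁ a x φ → SatAt M₂ b x φ

/-- φ(x) is invariant with respect to (i,2)-modal k-asimulations. -/
def KInvariantD2 (boxOne : Bool) (x : ℕ) (φ : FOForm) (k : ℕ) : Prop :=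
  ∀ Θ : Set ℕ, (φ.predLetters : Set ℕ) ⊆ Θ →
  ∀ (M₁ M₂ : Model) (t : M₁.U) (u : M₂.U)
    (A12 : List M₁.U → List M₂.U → Prop) (A21 : List M₂.U → List M₁.U → Prop)
    (B12 : List M₁.U → List M₂.U → Prop) (B21 : List M₂.U → List M₁.U → Prop),
    IsKAsimD2 boxOne Θ M₁ M₂ t u k A12 A21 B12 B21 →
    ∀ (a : M₁.U) (b : M₂.U), A12 [a] [b] → SatAt M₁ a x φ → SatAt M₂ b x φ

/-! ### Conditions for asimulations *simpliciter* (relations between elements). -/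

section ElemConds

variable (N P : Model)

/-- (base). -/
def BaseCondE (Θ : Set ℕ) (A : N.U → P.U → Prop) : Prop :=
  ∀ (a : N.U) (b : P.U), A a b → ∀ n ∈ Θ, N.pred n a → P.pred n b

/-- (step). -/
def StepCondE (A : N.U → P.U → Prop) (Arev : P.U → N.U → Prop) : Prop :=
  ∀ (a : N.U) (b d : P.U), A a b → P.rel b d →
    ∃ c : N.U, N.rel a c ∧ A c d ∧ Arev d c

/-- (box-1). -/
def Box1CondE (A : N.U → P.U → Prop) : Prop :=
  ∀ (a : N.U) (b d : P.U), A a b → P.relBox b d →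
    ∃ c : N.U, N.relBox a c ∧ A c d

/-- (box-2). -/
def Box2CondE (A : N.U → P.U → Prop) : Prop :=
  ∀ (a : N.U) (b d f : P.U), A a b → P.rel b d → P.relBox d f →
    ∃ c e : N.U, N.rel a c ∧ N.relBox c e ∧ A e f

/-- (diam-1). -/
def Diam1CondE (A : N.U → P.U → Prop) : Prop :=
  ∀ (a c : N.U) (b : P.U), A a b → N.relDiam a c →
    ∃ d : P.U, P.relDiam b d ∧ A c d

/-- (diam-2(1)). -/
def Diam2aCondE (A B : N.U → P.U → Prop) : Prop :=
  ∀ (a : N.U) (b d : P.U), A a b → P.rel b d →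
    ∃ c : N.U, N.rel a c ∧ B c d

/-- (diam-2(2)). -/
def Diam2bCondE (B A : N.U → P.U → Prop) : Prop :=
  ∀ (a c : N.U) (b : P.U), B a b → N.relDiam a c →
    ∃ d : P.U, P.relDiam b d ∧ A c d

end ElemConds

/-- An (i,1)-modal ⟨(M₁,t),(M₂,u)⟩-asimulation (j = 1). -/
def IsAsimD1 (boxOne : Bool) (Θ : Set ℕ) (M₁ M₂ : Model) (t : M₁.U) (u : M₂.U)
    (A12 : M₁.U → M₂.U → Prop) (A21 : M₂.U → M₁.U → Prop) : Prop :=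
  A12 t u ∧
  BaseCondE M₁ M₂ Θ A12 ∧ BaseCondE M₂ M₁ Θ A21 ∧
  StepCondE M₁ M₂ A12 A21 ∧ StepCondE M₂ M₁ A21 A12 ∧
  (if boxOne then Box1CondE M₁ M₂ A12 ∧ Box1CondE M₂ M₁ A21
   else Box2CondE M₁ M₂ A12 ∧ Box2CondE M₂ M₁ A21) ∧
  Diam1CondE M₁ M₂ A12 ∧ Diam1CondE M₂ M₁ A21

/-- An (i,2)-modal ⟨(M₁,t),(M₂,u)⟩-asimulation (j = 2). -/
def IsAsimD2 (boxOne : Bool) (Θ : Set ℕ) (M₁ M₂ : Model) (t : M₁.U) (u : M₂.U)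
    (A12 : M₁.U → M₂.U → Prop) (A21 : M₂.U → M₁.U → Prop)
    (B12 : M₁.U → M₂.U → Prop) (B21 : M₂.U → M₁.U → Prop) : Prop :=
  A12 t u ∧
  BaseCondE M₁ M₂ Θ A12 ∧ BaseCondE M₂ M₁ Θ A21 ∧
  StepCondE M₁ M₂ A12 A21 ∧ StepCondE M₂ M₁ A21 A12 ∧
  (if boxOne then Box1CondE M₁ M₂ A12 ∧ Box1CondE M₂ M₁ A21
   else Box2CondE M₁ M₂ A12 ∧ Box2CondE M₂ M₁ A21) ∧
  Diam2aCondE M₁ M₂ A12 B12 ∧ Diam2aCondE M₂ M₁ A21 B21 ∧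
  Diam2bCondE M₁ M₂ B12 A12 ∧ Diam2bCondE M₂ M₁ B21 A21

/-- φ(x) is invariant with respect to (i,1)-modal asimulations. -/
def InvariantD1 (boxOne : Bool) (x : ℕ) (φ : FOForm) : Prop :=
  ∀ Θ : Set ℕ, (φ.predLetters : Set ℕ) ⊆ Θ →
  ∀ (M₁ M₂ : Model) (t : M₁.U) (u : M₂.U)
    (A12 : M₁.U → M₂.U → Prop) (A21 : M₂.U → M₁.U → Prop),
    IsAsimD1 boxOne Θ M₁ M₂ t u A12 A21 →
    ∀ (a : M₁.U) (b : M₂.U), A12 a b → SatAt M₁ a x φ → SatAt M₂ b x φ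

/-- φ(x) is invariant with respect to (i,2)-modal asimulations. -/
def InvariantD2 (boxOne : Bool) (x : ℕ) (φ : FOForm) : Prop :=
  ∀ Θ : Set ℕ, (φ.predLetters : Set ℕ) ⊆ Θ →
  ∀ (M₁ M₂ : Model) (t : M₁.U) (u : M₂.U)
    (A12 : M₁.U → M₂.U → Prop) (A21 : M₂.U → M₁.U → Prop)
    (B12 : M₁.U → M₂.U → Prop) (B21 : M₂.U → M₁.U → Prop),
    IsAsimD2 boxOne Θ M₁ M₂ t u A12 A21 B12 B21 →
    ∀ (a : M₁.U) (b : M₂.U), A12 a b → SatAt M₁ a x φ → SatAt M₂ b x φ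

/-! ### Types, complete conjunctions, ω-saturation. -/

/-- `int(φ,x,l)`: the set of (2,2)-standard x-translations of modal
intuitionistic formulas which are (Σ_φ,x,l)-formulas. -/
def intSet (φ : FOForm) (x l : ℕ) : Set FOForm :=
  {ψ | (∃ I : MForm, ψ = ST false false I x) ∧
    ψ.predLetters ⊆ φ.predLetters ∧ ψ.freeVars ⊆ {x} ∧ ψ.degree ≤ l}

/-- `tp_l(φ(x),M,a)`. -/
def tpSet (φ : FOForm) (x l : ℕ) (M : Model) (a : M.U) : Set FOForm :=
  {ψ | ψ ∈ intSet φ x l ∧ SatAt M a x ψ}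

/-- Conjunction of a nonempty list of formulas. -/
def listConj : FOForm → List FOForm → FOForm
  | ψ, [] => ψ
  | ψ, χ :: L => FOForm.conj ψ (listConj χ L)

/-- Ψ(x) is a complete (φ,x,k)-conjunction. -/
def IsCompleteConj (φ : FOForm) (x k : ℕ) (Ψ : FOForm) : Prop :=
  (∃ (ψ₀ : FOForm) (L : List FOForm), ψ₀ ∈ intSet φ x k ∧
    (∀ χ ∈ L, χ ∈ intSet φ x k) ∧ Ψ = listConj ψ₀ L) ∧
  ∃ (M : Model) (a : M.U), SatAt M a x (FOForm.conj Ψ φ) ∧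
    ∀ ψ ∈ tpSet φ x k M a, Entails Ψ ψ

/-- `int_x(Θ)` for the (i,j)-standard translation. -/
def intX (Θ : Set ℕ) (boxOne diamOne : Bool) (x : ℕ) : Set FOForm :=
  {ψ | (∃ I : MForm, ψ = ST boxOne diamOne I x) ∧ (ψ.predLetters : Set ℕ) ⊆ Θ}

/-- `tp_x(M,t)` for the (i,j)-standard translation. -/
def tpX (Θ : Set ℕ) (boxOne diamOne : Bool) (x : ℕ) (M : Model) (t : M.U) : Set FOForm :=
  {ψ | ψ ∈ intX Θ boxOne diamOne x ∧ SatAt M t x ψ}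

/-- `imp_x(M,t) = ⋂ { t̄p_x(M,u) : t R_◇ u }` (for the (2,2)-translation). -/
def impX (Θ : Set ℕ) (x : ℕ) (M : Model) (t : M.U) : Set FOForm :=
  {ψ | ψ ∈ intX Θ false false x ∧ ∀ u : M.U, M.relDiam t u → ¬ SatAt M u x ψ}

/-- ω-saturation: for every finite tuple of parameters (the first `n` values of
an assignment `α`) and every set `Γ` of formulas with finitely many free
variables beyond the parameters, if `Γ` is consistent with the first-order
theory of `[M,ā]` (i.e. satisfiable together with it in some model), then `Γ`
is realized in `[M,ā]`. -/
def OmegaSaturated (M : Model) : Prop :=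
  ∀ (n : ℕ) (α : ℕ → M.U) (Γ : Set FOForm),
    (∃ k : ℕ, ∀ γ ∈ Γ, γ.freeVars ⊆ Finset.range (n + k)) →
    (∃ (N : Model) (β : ℕ → N.U),
      (∀ ψ : FOForm, ψ.freeVars ⊆ Finset.range n → Sat M ψ α → Sat N ψ β) ∧
      ∀ γ ∈ Γ, Sat N γ β) →
    ∃ α' : ℕ → M.U, (∀ i < n, α' i = α i) ∧ ∀ γ ∈ Γ, Sat M γ α'

/-! ### Relativization to a class κ of models. -/

/-- κ(Θ) is first-order axiomatizable for every finite Θ (with R ∈ Θ): for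
every finite set `S` of unary predicate letters there is a set of Θ-sentences
axiomatizing membership in κ. -/
def FinAxiomatizable (κ : Set Model) : Prop :=
  ∀ S : Finset ℕ, ∃ Ax : Set FOForm,
    (∀ ψ ∈ Ax, ψ.freeVars = ∅ ∧ (ψ.predLetters : Set ℕ) ⊆ (S : Set ℕ)) ∧
    ∀ M : Model, M ∈ κ ↔ ∀ ψ ∈ Ax, ∀ α : ℕ → M.U, Sat M ψ α

/-- φ κ-follows from ψ: {ψ, ¬φ} is not κ-satisfiable. -/
def KappaFollows (κ : Set Model) (ψ φ : FOForm) : Prop :=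
  ¬ ∃ M : Model, M ∈ κ ∧ ∃ α : ℕ → M.U, Sat M ψ α ∧ ¬ Sat M φ α

/-- κ-equivalence of formulas. -/
def KappaEquiv (κ : Set Model) (φ ψ : FOForm) : Prop :=
  KappaFollows κ φ ψ ∧ KappaFollows κ ψ φ

/-- φ(x) is κ-invariant with respect to (i,1)-modal asimulations. -/
def KappaInvariantD1 (κ : Set Model) (boxOne : Bool) (x : ℕ) (φ : FOForm) : Prop :=
  ∀ Θ : Set ℕ, (φ.predLetters : Set ℕ) ⊆ Θ →
  ∀ (M₁ M₂ : Model), M₁ ∈ κ → M₂ ∈ κ →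
  ∀ (t : M₁.U) (u : M₂.U)
    (A12 : M₁.U → M₂.U → Prop) (A21 : M₂.U → M₁.U → Prop),
    IsAsimD1 boxOne Θ M₁ M₂ t u A12 A21 →
    ∀ (a : M₁.U) (b : M₂.U), A12 a b → SatAt M₁ a x φ → SatAt M₂ b x φ

/-- φ(x) is κ-invariant with respect to (i,2)-modal asimulations. -/
def KappaInvariantD2 (κ : Set Model) (boxOne : Bool) (x : ℕ) (φ : FOForm) : Prop :=
  ∀ Θ : Set ℕ, (φ.predLetters : Set ℕ) ⊆ Θ →
  ∀ (M₁ M₂ : Model), M₁ ∈ κ → M₂ ∈ κ →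
  ∀ (t : M₁.U) (u : M₂.U)
    (A12 : M₁.U → M₂.U → Prop) (A21 : M₂.U → M₁.U → Prop)
    (B12 : M₁.U → M₂.U → Prop) (B21 : M₂.U → M₁.U → Prop),
    IsAsimD2 boxOne Θ M₁ M₂ t u A12 A21 B12 B21 →
    ∀ (a : M₁.U) (b : M₂.U), A12 a b → SatAt M₁ a x φ → SatAt M₂ b x φ

/-- φ(x) is κ-invariant with respect to (i,j)-modal asimulations
(`diamOne = true` means j = 1). -/
def KappaInvariant (κ : Set Model) (boxOne diamOne : Bool) (x : ℕ) (φ : FOForm) : Prop :=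
  if diamOne then KappaInvariantD1 κ boxOne x φ else KappaInvariantD2 κ boxOne x φ


/-! ### Proof -/

/-- Direct semantics of modal formulas for the (1,2)-translation. -/
def MSat (M : Model) : MForm → M.U → Prop
  | .bot, _ => False
  | .prop n, a => M.pred n a
  | .conj I J, a => MSat M I a ∧ MSat M J a
  | .disj I J, a => MSat M I a ∨ MSat M J a
  | .impl I J, a => ∀ b, M.rel a b → MSat M I b → MSat M J b
  | .box I, a => ∀ b, M.relBox a b → MSat M I b
  | .diam I, a => ∀ b, M.rel a b → ∃ c, M.relDiam b c ∧ MSat M I c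

theorem sat_ST (M : Model) (I : MForm) :
    ∀ (x : ℕ) (α : ℕ → M.U), Sat M (ST true false I x) α ↔ MSat M I (α x) := by
  induction I with
  | bot => intro x α; rfl
  | prop n => intro x α; rfl
  | conj I J ihI ihJ => intro x α; simp [ST, Sat, MSat, ihI, ihJ]
  | disj I J ihI ihJ => intro x α; simp [ST, Sat, MSat, ihI, ihJ]
  | impl I J ihI ihJ => intro x α; simp [ST, Sat, MSat, ihI, ihJ, Model.relOf]
  | box I ih => intro x α; simp [ST, Sat, MSat, ih, Model.relOf]
  | diam I ih => intro x α; simp [ST, Sat, MSat, ih, Model.relOf]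

theorem sat_congr (M : Model) (φ : FOForm) :
    ∀ (α β : ℕ → M.U), (∀ v ∈ φ.freeVars, α v = β v) → (Sat M φ α ↔ Sat M φ β) := by
  induction φ with
  | falsum => intro α β h; rfl
  | pred n v => intro α β h; simp [Sat, h v (by simp [FOForm.freeVars])]
  | rel s v w =>
    intro α β h
    simp [Sat, h v (by simp [FOForm.freeVars]), h w (by simp [FOForm.freeVars])]
  | conj f g ihf ihg =>
    intro α β h
    simp only [Sat]
    rw [ihf α β (fun v hv => h v (by simp [FOForm.freeVars, hv])),
      ihg α β (fun v hv => h v (by simp [FOForm.freeVars, hv]))]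
  | disj f g ihf ihg =>
    intro α β h
    simp only [Sat]
    rw [ihf α β (fun v hv => h v (by simp [FOForm.freeVars, hv])),
      ihg α β (fun v hv => h v (by simp [FOForm.freeVars, hv]))]
  | impl f g ihf ihg =>
    intro α β h
    simp only [Sat]
    rw [ihf α β (fun v hv => h v (by simp [FOForm.freeVars, hv])),
      ihg α β (fun v hv => h v (by simp [FOForm.freeVars, hv]))]
  | all v f ih =>
    intro α β h
    simp only [Sat]
    refine forall_congr' fun u => ih _ _ fun w hw => ?_
    by_cases hwv : w = v
    · subst hwv; simp
    · simp [hwv, h w (by simp [FOForm.freeVars, hw, hwv])]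
  | ex v f ih =>
    intro α β h
    simp only [Sat]
    refine exists_congr fun u => ih _ _ fun w hw => ?_
    by_cases hwv : w = v
    · subst hwv; simp
    · simp [hwv, h w (by simp [FOForm.freeVars, hw, hwv])]

theorem satAt_iff (M : Model) (x : ℕ) (φ : FOForm) (hfv : φ.freeVars ⊆ {x}) (α : ℕ → M.U) :
    SatAt M (α x) x φ ↔ Sat M φ α := by
  constructor
  · intro h; exact h α rfl
  · intro h β hβ
    refine (sat_congr M φ β α ?_).2 h
    intro v hv
    have := hfv hv
    simp only [Finset.mem_singleton] at this
    subst this; exact hβ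

/-- Make all letters outside `S` false. -/
def restr (M : Model) (S : Finset ℕ) : Model where
  U := M.U
  rel := M.rel
  relBox := M.relBox
  relDiam := M.relDiam
  pred n a := n ∈ S ∧ M.pred n a

theorem sat_restr (M : Model) (S : Finset ℕ) (φ : FOForm) :
    φ.predLetters ⊆ S → ∀ α : ℕ → M.U, (Sat (restr M S) φ α ↔ Sat M φ α) := by
  induction φ with
  | falsum => intro _ α; rfl
  | pred n v =>
    intro h α
    have : n ∈ S := h (by simp [FOForm.predLetters])
    simp [Sat, restr, this]
  | rel s v w => intro h α; cases s <;> rfl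
  | conj f g ihf ihg =>
    intro h α
    simp only [FOForm.predLetters, Finset.union_subset_iff] at h
    simp only [Sat]
    rw [ihf h.1 α, ihg h.2 α]
  | disj f g ihf ihg =>
    intro h α
    simp only [FOForm.predLetters, Finset.union_subset_iff] at h
    simp only [Sat]
    rw [ihf h.1 α, ihg h.2 α]
  | impl f g ihf ihg =>
    intro h α
    simp only [FOForm.predLetters, Finset.union_subset_iff] at h
    simp only [Sat]
    rw [ihf h.1 α, ihg h.2 α]
  | all v f ih =>
    intro h α
    exact forall_congr' fun u => ih h _
  | ex v f ih =>
    intro h α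
    exact exists_congr fun u => ih h _

theorem msat_pres (M₁ M₂ : Model)
    (A12 : M₁.U → M₂.U → Prop) (A21 : M₂.U → M₁.U → Prop)
    (B12 : M₁.U → M₂.U → Prop) (B21 : M₂.U → M₁.U → Prop) (t : M₁.U) (u : M₂.U)
    (h : IsAsimD2 true Set.univ M₁ M₂ t u A12 A21 B12 B21) (I : MForm) :
    (∀ a b, A12 a b → MSat M₁ I a → MSat M₂ I b) ∧
    (∀ a b, A21 a b → MSat M₂ I a → MSat M₁ I b) := by
  obtain ⟨-, b1, b2, s1, s2, hbox, d1, d2, e1, e2⟩ := h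
  simp only [if_true] at hbox
  obtain ⟨x1, x2⟩ := hbox
  induction I with
  | bot => exact ⟨fun _ _ _ h => h, fun _ _ _ h => h⟩
  | prop n =>
    exact ⟨fun a b hab h => b1 a b hab n trivial h, fun a b hab h => b2 a b hab n trivial h⟩
  | conj I J ihI ihJ =>
    exact ⟨fun a b hab h => ⟨ihI.1 a b hab h.1, ihJ.1 a b hab h.2⟩,
      fun a b hab h => ⟨ihI.2 a b hab h.1, ihJ.2 a b hab h.2⟩⟩
  | disj I J ihI ihJ =>
    exact ⟨fun a b hab h => h.imp (ihI.1 a b hab) (ihJ.1 a b hab),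
      fun a b hab h => h.imp (ihI.2 a b hab) (ihJ.2 a b hab)⟩
  | impl I J ihI ihJ =>
    constructor
    · intro a b hab h d hbd hd
      obtain ⟨c, hac, hcd, hdc⟩ := s1 a b d hab hbd
      exact ihJ.1 c d hcd (h c hac (ihI.2 d c hdc hd))
    · intro a b hab h d hbd hd
      obtain ⟨c, hac, hcd, hdc⟩ := s2 a b d hab hbd
      exact ihJ.2 c d hcd (h c hac (ihI.1 d c hdc hd))
  | box I ih =>
    constructor
    · intro a b hab h d hbd
      obtain ⟨c, hac, hcd⟩ := x1 a b d hab hbd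
      exact ih.1 c d hcd (h c hac)
    · intro a b hab h d hbd
      obtain ⟨c, hac, hcd⟩ := x2 a b d hab hbd
      exact ih.2 c d hcd (h c hac)
  | diam I ih =>
    constructor
    · intro a b hab h d hbd
      obtain ⟨c, hac, hcd⟩ := d1 a b d hab hbd
      obtain ⟨e, hce, he⟩ := h c hac
      obtain ⟨f, hdf, hef⟩ := e1 c e d hcd hce
      exact ⟨f, hdf, ih.1 e f hef he⟩
    · intro a b hab h d hbd
      obtain ⟨c, hac, hcd⟩ := d2 a b d hab hbd
      obtain ⟨e, hce, he⟩ := h c hac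
      obtain ⟨f, hdf, hef⟩ := e2 c e d hcd hce
      exact ⟨f, hdf, ih.2 e f hef he⟩

theorem forward (x : ℕ) (φ : FOForm) (hfv : φ.freeVars ⊆ {x})
    (I : MForm) (hI : Equiv φ (ST true false I x)) : InvariantD2 true x φ := by
  intro Θ hΘ M₁ M₂ t u A12 A21 B12 B21 h a b hab ha β hβ
  have key : ∀ (M : Model) (α : ℕ → M.U), Sat M φ α ↔
      MSat (restr M φ.predLetters) I (α x) := by
    intro M α
    rw [← sat_restr M φ.predLetters φ (Finset.Subset.refl _) α]
    rw [hI (restr M φ.predLetters) α]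
    exact sat_ST (restr M φ.predLetters) I x α
  have h' : IsAsimD2 true Set.univ (restr M₁ φ.predLetters) (restr M₂ φ.predLetters)
      t u A12 A21 B12 B21 := by
    obtain ⟨h0, b1, b2, s⟩ := h
    refine ⟨h0, ?_, ?_, s⟩
    · rintro a b hab n - ⟨hn, hp⟩
      exact ⟨hn, b1 a b hab n (hΘ hn) hp⟩
    · rintro a b hab n - ⟨hn, hp⟩
      exact ⟨hn, b2 a b hab n (hΘ hn) hp⟩
  have h1 := (key M₁ (fun _ => a)).1 (ha _ rfl)
  rw [key M₂ β, hβ]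
  exact (msat_pres _ _ _ _ _ _ _ _ h' I).1 a b hab h1

/-! Countability of modal formulas. -/

def mcode : MForm → ℕ
  | .bot => Nat.pair 0 0
  | .prop n => Nat.pair 1 n
  | .conj I J => Nat.pair 2 (Nat.pair (mcode I) (mcode J))
  | .disj I J => Nat.pair 3 (Nat.pair (mcode I) (mcode J))
  | .impl I J => Nat.pair 4 (Nat.pair (mcode I) (mcode J))
  | .box I => Nat.pair 5 (mcode I)
  | .diam I => Nat.pair 6 (mcode I)

theorem mcode_inj : Function.Injective mcode := by
  intro I
  induction I with
  | bot => intro J h; cases J <;> simp [mcode, Nat.pair_eq_pair] at h ⊢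
  | prop n => intro J h; cases J <;> simp [mcode, Nat.pair_eq_pair] at h ⊢; exact h
  | conj I1 I2 ih1 ih2 =>
    intro J h; cases J <;> simp [mcode, Nat.pair_eq_pair] at h ⊢
    exact ⟨ih1 h.1, ih2 h.2⟩
  | disj I1 I2 ih1 ih2 =>
    intro J h; cases J <;> simp [mcode, Nat.pair_eq_pair] at h ⊢
    exact ⟨ih1 h.1, ih2 h.2⟩
  | impl I1 I2 ih1 ih2 =>
    intro J h; cases J <;> simp [mcode, Nat.pair_eq_pair] at h ⊢
    exact ⟨ih1 h.1, ih2 h.2⟩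
  | box I1 ih1 =>
    intro J h; cases J <;> simp [mcode, Nat.pair_eq_pair] at h ⊢
    exact ih1 h
  | diam I1 ih1 =>
    intro J h; cases J <;> simp [mcode, Nat.pair_eq_pair] at h ⊢
    exact ih1 h

theorem exists_enum : ∃ e : ℕ → MForm, Function.Surjective e := by
  have : Countable MForm := mcode_inj.countable
  have : Nonempty MForm := ⟨.bot⟩
  exact exists_surjective_nat MForm

/-! Finite conjunctions and disjunctions. -/

def bigAnd : List MForm → MForm
  | [] => .impl .bot .bot
  | I :: l => .conj I (bigAnd l)

def bigOr : List MForm → MForm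
  | [] => .bot
  | I :: l => .disj I (bigOr l)

theorem msat_bigAnd (M : Model) (l : List MForm) (a : M.U) :
    MSat M (bigAnd l) a ↔ ∀ I ∈ l, MSat M I a := by
  induction l with
  | nil => simp [bigAnd, MSat]
  | cons I l ih => simp [bigAnd, MSat, ih]

theorem msat_bigOr (M : Model) (l : List MForm) (a : M.U) :
    MSat M (bigOr l) a ↔ ∃ I ∈ l, MSat M I a := by
  induction l with
  | nil => simp [bigOr, MSat]
  | cons I l ih => simp [bigOr, MSat, ih]

/-! Ultraproducts over ℕ (no quotient needed, since there is no identity). -/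

open Filter in
def ultra (M : ℕ → Model) : Model where
  U := ∀ i, (M i).U
  rel a b := ∀ᶠ i in (hyperfilter ℕ : Filter ℕ), (M i).rel (a i) (b i)
  relBox a b := ∀ᶠ i in (hyperfilter ℕ : Filter ℕ), (M i).relBox (a i) (b i)
  relDiam a b := ∀ᶠ i in (hyperfilter ℕ : Filter ℕ), (M i).relDiam (a i) (b i)
  pred n a := ∀ᶠ i in (hyperfilter ℕ : Filter ℕ), (M i).pred n (a i)

open Filter in
theorem exists_internal (M : ℕ → Model) (a : (ultra M).U) (Q : ∀ i, (M i).U → Prop) :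
    (∃ f : (ultra M).U, ∀ᶠ i in (hyperfilter ℕ : Filter ℕ), Q i (f i)) ↔
    ∀ᶠ i in (hyperfilter ℕ : Filter ℕ), ∃ y, Q i y := by
  classical
  constructor
  · rintro ⟨f, hf⟩
    filter_upwards [hf] with i hi using ⟨_, hi⟩
  · intro h
    refine ⟨fun i => if h : ∃ y, Q i y then h.choose else a i, ?_⟩
    filter_upwards [h] with i hi
    rw [dif_pos hi]
    exact hi.choose_spec

open Filter in
theorem update_ultra (M : ℕ → Model) (α : ℕ → (ultra M).U) (v : ℕ) (u : (ultra M).U) (i : ℕ) :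
    (fun w => Function.update α v u w i) = Function.update (fun w => α w i) v (u i) := by
  funext w
  by_cases h : w = v
  · subst h; simp
  · simp [h]

open Filter in
theorem los (M : ℕ → Model) (φ : FOForm) : ∀ α : ℕ → (ultra M).U,
    (Sat (ultra M) φ α ↔
      ∀ᶠ i in (hyperfilter ℕ : Filter ℕ), Sat (M i) φ (fun v => α v i)) := by
  induction φ with
  | falsum =>
    intro α
    simp only [Sat, eventually_const]
  | pred n v => intro α; rfl
  | rel s v w => intro α; cases s <;> rfl
  | conj f g ihf ihg => intro α; simp only [Sat, ihf, ihg, eventually_and]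
  | disj f g ihf ihg => intro α; simp only [Sat, ihf, ihg, Ultrafilter.eventually_or]
  | impl f g ihf ihg => intro α; simp only [Sat, ihf, ihg, Ultrafilter.eventually_imp]
  | all v f ih =>
    intro α
    have h := exists_internal M (α 0)
      (fun i y => ¬ Sat (M i) f (Function.update (fun w => α w i) v y))
    simp only [Sat, ih, update_ultra]
    rw [← not_iff_not, ← Ultrafilter.eventually_not]
    simp only [not_forall]
    rw [← h]
    simp only [← Ultrafilter.eventually_not]
  | ex v f ih =>
    intro α
    have h := exists_internal M (α 0)
      (fun i y => Sat (M i) f (Function.update (fun w => α w i) v y))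
    simp only [Sat, ih, update_ultra]
    exact h

open Filter in
theorem mlos (M : ℕ → Model) (I : MForm) (a : (ultra M).U) :
    MSat (ultra M) I a ↔ ∀ᶠ i in (hyperfilter ℕ : Filter ℕ), MSat (M i) I (a i) := by
  have h := los M (ST true false I 0) (fun _ => a)
  simp only [sat_ST] at h
  exact h

/-- Internal unary predicates of an ultraproduct. -/
def Internal (M : ℕ → Model) (P : (ultra M).U → Prop) : Prop :=
  ∃ Q : ∀ i, (M i).U → Prop, ∀ f : (ultra M).U,
    P f ↔ ∀ᶠ i in (Filter.hyperfilter ℕ : Filter ℕ), Q i (f i)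

theorem Internal.msat (M : ℕ → Model) (I : MForm) : Internal M (MSat (ultra M) I) :=
  ⟨_, mlos M I⟩

theorem Internal.rel (M : ℕ → Model) (a : (ultra M).U) : Internal M ((ultra M).rel a) :=
  ⟨fun i y => (M i).rel (a i) y, fun _ => Iff.rfl⟩

theorem Internal.relBox (M : ℕ → Model) (a : (ultra M).U) : Internal M ((ultra M).relBox a) :=
  ⟨fun i y => (M i).relBox (a i) y, fun _ => Iff.rfl⟩

theorem Internal.relDiam (M : ℕ → Model) (a : (ultra M).U) : Internal M ((ultra M).relDiam a) :=
  ⟨fun i y => (M i).relDiam (a i) y, fun _ => Iff.rfl⟩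

theorem Internal.not {M : ℕ → Model} {P : (ultra M).U → Prop} (h : Internal M P) :
    Internal M (fun y => ¬ P y) := by
  obtain ⟨Q, hQ⟩ := h
  exact ⟨fun i y => ¬ Q i y, fun f => (not_congr (hQ f)).trans Ultrafilter.eventually_not.symm⟩

theorem Internal.const (M : ℕ → Model) (p : Prop) : Internal M (fun _ => p) :=
  ⟨fun _ _ => p, fun f => by simp⟩

theorem Internal.imp {M : ℕ → Model} {p : Prop} {P : (ultra M).U → Prop} (h : Internal M P) :
    Internal M (fun y => p → P y) := by
  by_cases hp : p
  · simpa [hp] using h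
  · simpa [hp] using Internal.const M True

theorem Internal.and {M : ℕ → Model} {P P' : (ultra M).U → Prop} (h : Internal M P)
    (h' : Internal M P') : Internal M (fun y => P y ∧ P' y) := by
  obtain ⟨Q, hQ⟩ := h
  obtain ⟨Q', hQ'⟩ := h'
  exact ⟨fun i y => Q i y ∧ Q' i y, fun f => (and_congr (hQ f) (hQ' f)).trans Filter.eventually_and.symm⟩

theorem Internal.dia (M : ℕ → Model) (J : MForm) :
    Internal M (fun y => ∃ z, (ultra M).relDiam y z ∧ MSat (ultra M) J z) := by
  refine ⟨fun i y => ∃ z, (M i).relDiam y z ∧ MSat (M i) J z, fun f => ?_⟩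
  rw [← exists_internal M f (fun i z => (M i).relDiam (f i) z ∧ MSat (M i) J z)]
  refine exists_congr fun z => ?_
  rw [mlos, Filter.eventually_and]
  rfl

open Filter in
theorem saturation (M : ℕ → Model) (P0 : (ultra M).U → Prop) (h0 : Internal M P0)
    (P : MForm → (ultra M).U → Prop) (hP : ∀ I, Internal M (P I))
    (hfin : ∀ l : List MForm, ∃ y, P0 y ∧ ∀ I ∈ l, P I y) :
    ∃ y, P0 y ∧ ∀ I, P I y := by
  classical
  obtain ⟨e, he⟩ := exists_enum
  obtain ⟨Q0, hQ0⟩ := h0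
  choose Q hQ using hP
  obtain ⟨a, -, -⟩ := hfin []
  let S : ℕ → ℕ → Prop := fun i n => ∃ y, Q0 i y ∧ ∀ m < n, Q (e m) i y
  have hS : ∀ n, ∀ᶠ i in (hyperfilter ℕ : Filter ℕ), S i n := by
    intro n
    obtain ⟨y, hy0, hy⟩ := hfin ((List.range n).map e)
    have h1 := (hQ0 y).1 hy0
    have h2 : ∀ᶠ i in (hyperfilter ℕ : Filter ℕ), ∀ m ∈ Set.Iio n, Q (e m) i (y i) := by
      rw [eventually_all_finite (Set.finite_Iio n)]
      intro m hm
      exact (hQ (e m) y).1 (hy _ (by simp only [List.mem_map, List.mem_range]; exact ⟨m, hm, rfl⟩))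
    filter_upwards [h1, h2] with i a1 a2
    exact ⟨y i, a1, fun m hm => a2 m hm⟩
  let g : ℕ → ℕ := fun i => Nat.findGreatest (S i) i
  have hg : ∀ i n, n ≤ i → S i n → S i (g i) ∧ n ≤ g i := fun i n hn h =>
    ⟨Nat.findGreatest_spec hn h, Nat.le_findGreatest hn h⟩
  have hge : ∀ n, ∀ᶠ i in (hyperfilter ℕ : Filter ℕ), n ≤ i := fun n =>
    Nat.hyperfilter_le_atTop (eventually_ge_atTop n)
  let f : (ultra M).U := fun i => if h : S i (g i) then h.choose else a i
  have hf : ∀ i, S i (g i) → Q0 i (f i) ∧ ∀ m < g i, Q (e m) i (f i) := by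
    intro i h
    have : f i = h.choose := dif_pos h
    rw [this]
    exact h.choose_spec
  refine ⟨f, ?_, ?_⟩
  · rw [hQ0]
    filter_upwards [hS 0] with i hi
    exact (hf i (hg i 0 (Nat.zero_le _) hi).1).1
  · intro I
    obtain ⟨m, rfl⟩ := he I
    rw [hQ]
    filter_upwards [hS (m + 1), hge (m + 1)] with i hi hi'
    obtain ⟨h1, h2⟩ := hg i (m + 1) hi' hi
    exact (hf i h1).2 m h2

/-- The canonical relations. -/
def canA (M N : Model) (a : M.U) (b : N.U) : Prop := ∀ I, MSat M I a → MSat N I b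

def canB (M N : Model) (a : M.U) (b : N.U) : Prop :=
  ∀ I, (∃ c, M.relDiam a c ∧ MSat M I c) → ∃ d, N.relDiam b d ∧ MSat N I d

theorem can_base (M N : Model) (Θ : Set ℕ) : BaseCondE M N Θ (canA M N) :=
  fun _ _ h n _ hp => h (.prop n) hp

theorem can_step (M : ℕ → Model) (N : Model) :
    StepCondE (ultra M) N (canA (ultra M) N) (canA N (ultra M)) := by
  classical
  intro a b d hab hbd
  obtain ⟨c, hac, hc⟩ := saturation M ((ultra M).rel a) (Internal.rel M a)
    (fun I y => (MSat N I d → MSat (ultra M) I y) ∧ (¬ MSat N I d → ¬ MSat (ultra M) I y))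
    (fun I => (Internal.msat M I).imp.and (Internal.msat M I).not.imp) (by
      intro l
      by_contra hcon
      push Not at hcon
      have : MSat N (.impl (bigAnd (l.filter (fun I => MSat N I d)))
          (bigOr (l.filter (fun I => ¬ MSat N I d)))) b := by
        apply hab
        intro y hay hy
        rw [msat_bigAnd] at hy
        rw [msat_bigOr]
        obtain ⟨I, hI, hy'⟩ := hcon y hay
        by_cases hd : MSat N I d
        · exact absurd hd (hy' (fun _ => hy I (by simp [hI, hd]))).1
        · refine ⟨I, by simp [hI, hd], (hy' (fun h => absurd h hd)).2⟩
      have h2 := this d hbd (by rw [msat_bigAnd]; intro I hI; simpa using (List.mem_filter.1 hI).2)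
      rw [msat_bigOr] at h2
      obtain ⟨I, hI, hI'⟩ := h2
      simp [hI'] at hI)
  exact ⟨c, hac, fun I hI => by_contra fun h => (hc I).2 h hI, fun I hI => (hc I).1 hI⟩

theorem can_box (M : ℕ → Model) (N : Model) : Box1CondE (ultra M) N (canA (ultra M) N) := by
  classical
  intro a b d hab hbd
  obtain ⟨c, hac, hc⟩ := saturation M ((ultra M).relBox a) (Internal.relBox M a)
    (fun I y => (¬ MSat N I d → ¬ MSat (ultra M) I y))
    (fun I => (Internal.msat M I).not.imp) (by
      intro l
      by_contra hcon
      push Not at hcon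
      have : MSat N (.box (bigOr (l.filter (fun I => ¬ MSat N I d)))) b := by
        apply hab
        intro y hay
        rw [msat_bigOr]
        obtain ⟨I, hI, hd, hy'⟩ := hcon y hay
        exact ⟨I, by simp [hI, hd], hy'⟩
      have h2 := this d hbd
      rw [msat_bigOr] at h2
      obtain ⟨I, hI, hI'⟩ := h2
      simp [hI'] at hI)
  exact ⟨c, hac, fun I hI => by_contra fun h => hc I h hI⟩

theorem can_diam_a (M : ℕ → Model) (N : Model) :
    Diam2aCondE (ultra M) N (canA (ultra M) N) (canB (ultra M) N) := by
  classical
  intro a b d hab hbd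
  obtain ⟨c, hac, hc⟩ := saturation M ((ultra M).rel a) (Internal.rel M a)
    (fun I y => ((¬ ∃ z, N.relDiam d z ∧ MSat N I z) →
      ¬ ∃ z, (ultra M).relDiam y z ∧ MSat (ultra M) I z))
    (fun I => (Internal.dia M I).not.imp) (by
      intro l
      by_contra hcon
      have : MSat N (.diam (bigOr (l.filter (fun I => ¬ ∃ z, N.relDiam d z ∧ MSat N I z)))) b := by
        apply hab
        intro y hay
        by_contra hno
        refine hcon ⟨y, hay, ?_⟩
        rintro I hI hd ⟨z, hyz, hz⟩
        refine hno ⟨z, hyz, ?_⟩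
        rw [msat_bigOr]
        exact ⟨I, List.mem_filter.2 ⟨hI, decide_eq_true hd⟩, hz⟩
      obtain ⟨z, hdz, hz⟩ := this d hbd
      rw [msat_bigOr] at hz
      obtain ⟨I, hI, hI'⟩ := hz
      exact of_decide_eq_true (List.mem_filter.1 hI).2 ⟨z, hdz, hI'⟩)
  exact ⟨c, hac, fun I hI => by_contra fun h => hc I h hI⟩

theorem can_diam_b (M : Model) (N : ℕ → Model) :
    Diam2bCondE M (ultra N) (canB M (ultra N)) (canA M (ultra N)) := by
  classical
  intro a c b hab hac
  refine saturation N ((ultra N).relDiam b) (Internal.relDiam N b)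
    (fun I y => (MSat M I c → MSat (ultra N) I y))
    (fun I => (Internal.msat N I).imp) ?_
  intro l
  obtain ⟨d, hbd, hd⟩ := hab (bigAnd (l.filter (fun I => MSat M I c)))
    ⟨c, hac, by rw [msat_bigAnd]; intro I hI; simpa using (List.mem_filter.1 hI).2⟩
  rw [msat_bigAnd] at hd
  exact ⟨d, hbd, fun I hI hc => hd I (by simp [hI, hc])⟩

theorem can_asim (M N : ℕ → Model) (t : (ultra M).U) (u : (ultra N).U)
    (h : canA (ultra M) (ultra N) t u) :
    IsAsimD2 true Set.univ (ultra M) (ultra N) t u (canA _ _) (canA _ _) (canB _ _) (canB _ _) := by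
  refine ⟨h, can_base _ _ _, can_base _ _ _, can_step _ _, can_step _ _, ?_,
    can_diam_a _ _, can_diam_a _ _, can_diam_b _ _, can_diam_b _ _⟩
  simp only [if_true]
  exact ⟨can_box _ _, can_box _ _⟩

open Filter in
theorem backward (x : ℕ) (φ : FOForm) (hfv : φ.freeVars ⊆ {x}) (hinv : InvariantD2 true x φ) :
    ∃ I : MForm, Equiv φ (ST true false I x) := by
  classical
  by_contra hno
  push Not at hno
  obtain ⟨e, he⟩ := exists_enum
  have hge : ∀ n, ∀ᶠ i in (hyperfilter ℕ : Filter ℕ), n ≤ i := fun n =>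
    Nat.hyperfilter_le_atTop (eventually_ge_atTop n)
  let C : MForm → Prop := fun I => ∀ (M : Model) (α : ℕ → M.U), Sat M φ α → MSat M I (α x)
  have h1 : ∀ n : ℕ, ∃ (N : Model) (α : ℕ → N.U), ¬ Sat N φ α ∧
      ∀ m < n, C (e m) → MSat N (e m) (α x) := by
    intro n
    by_contra hcon
    push Not at hcon
    apply hno (bigAnd (((List.range n).map e).filter (fun I => C I)))
    intro M α
    rw [sat_ST, msat_bigAnd]
    constructor
    · intro h I hI
      exact (of_decide_eq_true (List.mem_filter.1 hI).2 : C I) M α h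
    · intro h
      by_contra hφ
      obtain ⟨m, hm, hC, hn⟩ := hcon M α hφ
      refine hn (h _ (List.mem_filter.2 ⟨?_, decide_eq_true hC⟩))
      exact List.mem_map.2 ⟨m, List.mem_range.2 hm, rfl⟩
  choose N β hN1 hN2 using h1
  let γ : ℕ → (ultra N).U := fun v i => β i v
  have hu1 : ¬ Sat (ultra N) φ γ := by
    rw [los, ← Ultrafilter.eventually_not]
    exact Eventually.of_forall hN1
  have hu2 : ∀ I, C I → MSat (ultra N) I (γ x) := by
    intro I hI
    obtain ⟨m, rfl⟩ := he I
    rw [mlos]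
    filter_upwards [hge (m + 1)] with i hi
    exact hN2 i m hi hI
  have h2 : ∀ n : ℕ, ∃ (K : Model) (α : ℕ → K.U), Sat K φ α ∧
      ∀ m < n, ¬ MSat (ultra N) (e m) (γ x) → ¬ MSat K (e m) (α x) := by
    intro n
    by_contra hcon
    push Not at hcon
    have hC : C (bigOr (((List.range n).map e).filter (fun I => ¬ MSat (ultra N) I (γ x)))) := by
      intro M α hφ
      obtain ⟨m, hm, h3, h4⟩ := hcon M α hφ
      rw [msat_bigOr]
      refine ⟨e m, List.mem_filter.2 ⟨?_, decide_eq_true h3⟩, h4⟩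
      exact List.mem_map.2 ⟨m, List.mem_range.2 hm, rfl⟩
    have := hu2 _ hC
    rw [msat_bigOr] at this
    obtain ⟨I, hI, hI'⟩ := this
    exact of_decide_eq_true (List.mem_filter.1 hI).2 hI'
  choose K δ hK1 hK2 using h2
  let ε : ℕ → (ultra K).U := fun v i => δ i v
  have ht1 : Sat (ultra K) φ ε := by
    rw [los]
    exact Eventually.of_forall hK1
  have ht2 : canA (ultra K) (ultra N) (ε x) (γ x) := by
    intro I hI
    by_contra hI'
    obtain ⟨m, rfl⟩ := he I
    revert hI
    change ¬ _
    rw [mlos, ← Ultrafilter.eventually_not]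
    filter_upwards [hge (m + 1)] with i hi
    exact hK2 i m hi hI'
  have := hinv Set.univ (Set.subset_univ _) _ _ _ _ _ _ _ _ (can_asim K N _ _ ht2) _ _ ht2
    ((satAt_iff _ x φ hfv ε).2 ht1)
  exact hu1 ((satAt_iff _ x φ hfv γ).1 this)

/-- **Theorem 2, case (i,j) = (1,2).**  φ(x) is logically equivalent to the
(1,2)-standard x-translation of a modal intuitionistic formula iff φ(x) is
invariant with respect to (1,2)-modal asimulations. -/
theorem statement_7 (x : ℕ) (φ : FOForm) (hfv : φ.freeVars ⊆ {x}) :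
    (∃ I : MForm, Equiv φ (ST true false I x)) ↔ InvariantD2 true x φ := by
  constructor
  · rintro ⟨I, hI⟩
    exact forward x φ hfv I hI
  · exact backward x φ hfv

end ModalIntAsim
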